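/- arXiv:1312.0167 — 2 statements merged into one kernel-verified Lean document; each statement's English description precedes it below -/
import Mathlib

section
/- Let a > 0, ε > 0 and μ ∈ ℂ, and assume that the parabola {μ² − (ξ + iε)² : ξ ∈ ℝ} is disjoint from the set {4π²ℓ²/a² : ℓ = 0, 1, 2, …} of eigenvalues of the Laplacian on a circle of circumference a. Then there exists a constant C > 0 such that for every smooth function u : ℝ² → ℂ that is a-periodic in the second variable and compactly supported in the first variable, one has Σ_{p+q ≤ 2} ∫_{ℝ×(0,a)} e^{2εx} |∂_x^p ∂_y^q u(x,y)|² dx dy ≤ C ∫_{ℝ×(0,a)} e^{2εx} |(−∂_x² − ∂_y² − μ²) u(x,y)|² dx dy. -/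
open MeasureTheory Real

/-- The mixed partial derivative `∂ₓᵖ ∂_yᑫ u` of a function `u : ℝ → ℝ → ℂ`. -/
noncomputable def mixedPartialDeriv (p q : ℕ) (u : ℝ → ℝ → ℂ) (x y : ℝ) : ℂ :=
  iteratedDeriv p (fun s => iteratedDeriv q (u s) y) x


namespace CylEst

/-- The measure on the fundamental domain of the cylinder. -/
noncomputable abbrev cylMeasure (a : ℝ) : Measure (ℝ × ℝ) :=
  (volume : Measure ℝ).prod (volume.restrict (Set.Ioc 0 a))

/-- Smooth, periodic, compactly supported in `x`. -/
structure Nice (a : ℝ) (w : ℝ → ℝ → ℂ) : Prop where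
  smooth : ContDiff ℝ (⊤ : ℕ∞) (fun p : ℝ × ℝ => w p.1 p.2)
  per : ∀ x y : ℝ, w x (y + a) = w x y
  supp : ∃ K : ℝ, ∀ x y : ℝ, K ≤ |x| → w x y = 0

/-- Partial derivative in `x`. -/
noncomputable def dx (w : ℝ → ℝ → ℂ) (x y : ℝ) : ℂ := deriv (fun s => w s y) x

/-- Partial derivative in `y`. -/
noncomputable def dy (w : ℝ → ℝ → ℂ) (x y : ℝ) : ℂ := deriv (w x) y

lemma integrable_cyl {E : Type*} [NormedAddCommGroup E] (a : ℝ) (F : ℝ × ℝ → E)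
    (hF : Continuous F) (hK : ∃ K : ℝ, ∀ x y : ℝ, K ≤ |x| → F (x, y) = 0) :
    Integrable F (cylMeasure a) := by
  obtain ⟨K, hK⟩ := hK
  have h1 : IntegrableOn F (Set.Icc (-K) K ×ˢ Set.Icc 0 a) volume :=
    hF.continuousOn.integrableOn_compact (isCompact_Icc.prod isCompact_Icc)
  have h2 : cylMeasure a = (volume : Measure (ℝ × ℝ)).restrict (Set.univ ×ˢ Set.Ioc 0 a) := by
    rw [cylMeasure, Measure.volume_eq_prod, ← Measure.prod_restrict, Measure.restrict_univ]
  rw [h2]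
  change IntegrableOn _ _ _
  refine IntegrableOn.of_forall_sdiff_eq_zero (s := Set.Icc (-K) K ×ˢ Set.Ioc 0 a)
    (h1.mono_set (Set.prod_mono le_rfl Set.Ioc_subset_Icc_self))
    (MeasurableSet.univ.prod measurableSet_Ioc) ?_
  rintro ⟨x, y⟩ hz
  apply hK
  simp only [Set.mem_sdiff, Set.mem_prod, Set.mem_univ, true_and, Set.mem_Icc, not_and] at hz
  by_contra hc
  push Not at hc
  rw [abs_lt] at hc
  exact hz.2 ⟨hc.1.le, hc.2.le⟩ hz.1

variable {a : ℝ} {w : ℝ → ℝ → ℂ}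

lemma Nice.hasDerivAt_x (h : Nice a w) (x y : ℝ) :
    HasDerivAt (fun s => w s y) (fderiv ℝ (fun p : ℝ × ℝ => w p.1 p.2) (x, y) (1, 0)) x := by
  have h1 : HasFDerivAt (fun p : ℝ × ℝ => w p.1 p.2) _ (x, y) :=
    ((h.smooth.differentiable (by simp)) (x, y)).hasFDerivAt
  exact h1.comp_hasDerivAt (f := fun s : ℝ => ((s, y) : ℝ × ℝ)) x
    ((hasDerivAt_id x).prodMk (hasDerivAt_const x y))

lemma Nice.hasDerivAt_y (h : Nice a w) (x y : ℝ) :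
    HasDerivAt (w x) (fderiv ℝ (fun p : ℝ × ℝ => w p.1 p.2) (x, y) (0, 1)) y := by
  have h1 : HasFDerivAt (fun p : ℝ × ℝ => w p.1 p.2) _ (x, y) :=
    ((h.smooth.differentiable (by simp)) (x, y)).hasFDerivAt
  exact h1.comp_hasDerivAt (f := fun s : ℝ => ((x, s) : ℝ × ℝ)) y
    ((hasDerivAt_const y x).prodMk (hasDerivAt_id y))

lemma Nice.hasDx (h : Nice a w) (x y : ℝ) : HasDerivAt (fun s => w s y) (dx w x y) x := by
  have := h.hasDerivAt_x x y
  rw [dx, this.deriv]; exact this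

lemma Nice.hasDy (h : Nice a w) (x y : ℝ) : HasDerivAt (w x) (dy w x y) y := by
  have := h.hasDerivAt_y x y
  rw [dy, this.deriv]; exact this

lemma Nice.smooth_fderiv (h : Nice a w) (v : ℝ × ℝ) : ContDiff ℝ (⊤ : ℕ∞)
    (fun p : ℝ × ℝ => fderiv ℝ (fun p : ℝ × ℝ => w p.1 p.2) p v) :=
  (h.smooth.fderiv_right (m := (⊤ : ℕ∞)) (by simp)).clm_apply contDiff_const

lemma Nice.dx (h : Nice a w) : Nice a (dx w) := by
  refine ⟨?_, ?_, ?_⟩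
  · convert h.smooth_fderiv (1, 0) using 2 with p
    exact (h.hasDerivAt_x p.1 p.2).deriv
  · intro x y
    simp only [CylEst.dx, h.per]
  · obtain ⟨K, hK⟩ := h.supp
    refine ⟨K + 1, fun x y hx => ?_⟩
    have : (fun s => w s y) =ᶠ[nhds x] fun _ => 0 := by
      have ho : IsOpen {s : ℝ | K < |s|} := isOpen_lt continuous_const continuous_abs
      filter_upwards [ho.mem_nhds (show K < |x| by linarith)] with s hs
      exact hK s y (le_of_lt hs)
    rw [CylEst.dx, this.deriv_eq, deriv_const]

lemma Nice.dy (h : Nice a w) : Nice a (dy w) := by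
  refine ⟨?_, ?_, ?_⟩
  · convert h.smooth_fderiv (0, 1) using 2 with p
    exact (h.hasDerivAt_y p.1 p.2).deriv
  · intro x y
    have := deriv_comp_add_const (w x) a y
    rw [CylEst.dy, CylEst.dy, ← this]
    congr 1
    funext y
    exact h.per x y
  · obtain ⟨K, hK⟩ := h.supp
    refine ⟨K, fun x y hx => ?_⟩
    have : w x = fun _ => 0 := funext fun y => hK x y hx
    rw [CylEst.dy, this, deriv_const]

lemma Nice.continuous (h : Nice a w) : Continuous (fun p : ℝ × ℝ => w p.1 p.2) :=
  h.smooth.continuous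

lemma Nice.integrable (h : Nice a w) :
    Integrable (fun p : ℝ × ℝ => w p.1 p.2) (cylMeasure a) :=
  integrable_cyl a _ h.continuous h.supp

lemma Nice.mul (h : Nice a w) {e : ℝ → ℝ → ℂ}
    (he : ContDiff ℝ (⊤ : ℕ∞) (fun p : ℝ × ℝ => e p.1 p.2))
    (hp : ∀ x y : ℝ, e x (y + a) = e x y) : Nice a (fun x y => e x y * w x y) := by
  refine ⟨he.mul h.smooth, ?_, ?_⟩
  · intro x y; simp only [hp, h.per]
  · obtain ⟨K, hK⟩ := h.supp
    exact ⟨K, fun x y hx => by simp [hK x y hx]⟩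

lemma Nice.add (h : Nice a w) {e : ℝ → ℝ → ℂ}
    (he : Nice a e) : Nice a (fun x y => w x y + e x y) := by
  refine ⟨h.smooth.add he.smooth, ?_, ?_⟩
  · intro x y; simp only [he.per, h.per]
  · obtain ⟨K, hK⟩ := h.supp
    obtain ⟨K', hK'⟩ := he.supp
    exact ⟨max K K', fun x y hx => by
      simp [hK x y ((le_max_left _ _).trans hx), hK' x y ((le_max_right _ _).trans hx)]⟩

lemma Nice.compactSupport (h : Nice a w) (y : ℝ) : HasCompactSupport (fun s => w s y) := by
  obtain ⟨K, hK⟩ := h.supp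
  refine HasCompactSupport.intro (isCompact_Icc (a := -K) (b := K)) fun x hx => hK x y ?_
  by_contra hc
  push Not at hc
  rw [abs_lt] at hc
  exact hx ⟨hc.1.le, hc.2.le⟩

lemma Nice.smooth_x (h : Nice a w) (y : ℝ) : ContDiff ℝ (⊤ : ℕ∞) (fun s => w s y) :=
  h.smooth.comp (contDiff_id.prodMk contDiff_const)

lemma Nice.integral_dx (h : Nice a w) :
    ∫ z : ℝ × ℝ, CylEst.dx w z.1 z.2 ∂(cylMeasure a) = 0 := by
  rw [integral_prod_symm _ h.dx.integrable]
  have : ∀ y, ∫ x, CylEst.dx w x y = 0 := fun y =>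
    integral_eq_zero_of_hasDerivAt_of_integrable (fun x => h.hasDx x y)
      ((h.dx.smooth_x y).continuous.integrable_of_hasCompactSupport (h.dx.compactSupport y))
      ((h.smooth_x y).continuous.integrable_of_hasCompactSupport (h.compactSupport y))
  simp [this]

lemma Nice.integral_dy (ha : 0 < a) (h : Nice a w) :
    ∫ z : ℝ × ℝ, CylEst.dy w z.1 z.2 ∂(cylMeasure a) = 0 := by
  rw [integral_prod _ h.dy.integrable]
  have : ∀ x, ∫ y in Set.Ioc 0 a, CylEst.dy w x y = 0 := fun x => by
    rw [← intervalIntegral.integral_of_le ha.le,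
      intervalIntegral.integral_eq_sub_of_hasDerivAt (fun y _ => h.hasDy x y)]
    · have := h.per x 0
      rw [zero_add] at this
      rw [this, sub_self]
    · refine Continuous.intervalIntegrable ?_ _ _
      exact h.dy.continuous.comp (continuous_const.prodMk continuous_id)
  simp [this]

/-- The character. -/
noncomputable def chr (a ξ : ℝ) (n : ℤ) (x y : ℝ) : ℂ :=
  Complex.exp (-((2 * π * ξ * x + 2 * π * n / a * y : ℝ) : ℂ) * Complex.I)

/-- Fourier transform on the cylinder. -/
noncomputable def hat (a : ℝ) (w : ℝ → ℝ → ℂ) (ξ : ℝ) (n : ℤ) : ℂ :=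
  ∫ z : ℝ × ℝ, chr a ξ n z.1 z.2 * w z.1 z.2 ∂(cylMeasure a)

lemma chr_smooth (a ξ : ℝ) (n : ℤ) :
    ContDiff ℝ (⊤ : ℕ∞) (fun p : ℝ × ℝ => chr a ξ n p.1 p.2) := by
  unfold chr
  have h : ContDiff ℝ (⊤ : ℕ∞) (fun p : ℝ × ℝ => (2 * π * ξ * p.1 + 2 * π * n / a * p.2)) := by
    fun_prop
  exact (((Complex.ofRealCLM.contDiff.comp h).neg).mul contDiff_const).cexp

lemma chr_per (ha : 0 < a) (ξ : ℝ) (n : ℤ) (x y : ℝ) :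
    chr a ξ n x (y + a) = chr a ξ n x y := by
  unfold chr
  rw [Complex.exp_eq_exp_iff_exists_int]
  refine ⟨-n, ?_⟩
  have : (a : ℂ) ≠ 0 := by exact_mod_cast ha.ne'
  push_cast
  field_simp
  ring

lemma Nice.chr_mul (ha : 0 < a) (h : Nice a w) (ξ : ℝ) (n : ℤ) :
    Nice a (fun x y => chr a ξ n x y * w x y) :=
  h.mul (chr_smooth a ξ n) (chr_per ha ξ n)

lemma hasDerivAt_chr_x (a ξ : ℝ) (n : ℤ) (x y : ℝ) :
    HasDerivAt (fun s => chr a ξ n s y) (-(2 * π * ξ * Complex.I) * chr a ξ n x y) x := by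
  unfold chr
  have h : HasDerivAt (fun x : ℝ => (2 * π * ξ * x + 2 * π * n / a * y)) (2 * π * ξ) x := by
    simpa using ((hasDerivAt_id x).const_mul (2 * π * ξ)).add_const (2 * π * n / a * y)
  refine (h.ofReal_comp.neg.mul_const Complex.I).cexp.congr_deriv ?_
  simp only [Pi.neg_apply]
  push_cast; ring

lemma hasDerivAt_chr_y (a ξ : ℝ) (n : ℤ) (x y : ℝ) :
    HasDerivAt (fun s => chr a ξ n x s) (-(2 * π * n / a * Complex.I) * chr a ξ n x y) y := by
  unfold chr
  have h : HasDerivAt (fun y : ℝ => (2 * π * ξ * x + 2 * π * n / a * y)) (2 * π * n / a) y := by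
    simpa using ((hasDerivAt_id y).const_mul (2 * π * n / a)).const_add (2 * π * ξ * x)
  refine (h.ofReal_comp.neg.mul_const Complex.I).cexp.congr_deriv ?_
  simp only [Pi.neg_apply]
  push_cast; ring

lemma hat_const_mul (c : ℂ) (w : ℝ → ℝ → ℂ) (ξ : ℝ) (n : ℤ) :
    hat a (fun x y => c * w x y) ξ n = c * hat a w ξ n := by
  unfold hat
  rw [← integral_const_mul]
  congr 1; funext z; ring

lemma hat_add (ha : 0 < a) (h : Nice a w) {v : ℝ → ℝ → ℂ} (hv : Nice a v) (ξ : ℝ) (n : ℤ) :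
    hat a (fun x y => w x y + v x y) ξ n = hat a w ξ n + hat a v ξ n := by
  unfold hat
  rw [← integral_add (h.chr_mul ha ξ n).integrable (hv.chr_mul ha ξ n).integrable]
  congr 1; funext z; ring

lemma hat_dx (ha : 0 < a) (h : Nice a w) (ξ : ℝ) (n : ℤ) :
    hat a (dx w) ξ n = (2 * π * ξ * Complex.I) * hat a w ξ n := by
  have h0 := (h.chr_mul ha ξ n).integral_dx
  have h1 : ∀ x y, CylEst.dx (fun x y => chr a ξ n x y * w x y) x y =
      -(2 * π * ξ * Complex.I) * (chr a ξ n x y * w x y) + chr a ξ n x y * dx w x y := by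
    intro x y
    rw [show CylEst.dx (fun x y => chr a ξ n x y * w x y) x y = _ from
      ((hasDerivAt_chr_x a ξ n x y).mul (h.hasDx x y)).deriv]
    ring
  simp only [h1] at h0
  rw [integral_add ((h.chr_mul ha ξ n).integrable.const_mul _) (h.dx.chr_mul ha ξ n).integrable,
    integral_const_mul] at h0
  unfold hat
  linear_combination h0

lemma hat_dy (ha : 0 < a) (h : Nice a w) (ξ : ℝ) (n : ℤ) :
    hat a (dy w) ξ n = (2 * π * n / a * Complex.I) * hat a w ξ n := by
  have h0 := (h.chr_mul ha ξ n).integral_dy ha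
  have h1 : ∀ x y, CylEst.dy (fun x y => chr a ξ n x y * w x y) x y =
      -(2 * π * n / a * Complex.I) * (chr a ξ n x y * w x y) + chr a ξ n x y * dy w x y := by
    intro x y
    rw [show CylEst.dy (fun x y => chr a ξ n x y * w x y) x y = _ from
      ((hasDerivAt_chr_y a ξ n x y).mul (h.hasDy x y)).deriv]
    ring
  simp only [h1] at h0
  rw [integral_add ((h.chr_mul ha ξ n).integrable.const_mul _) (h.dy.chr_mul ha ξ n).integrable,
    integral_const_mul] at h0
  unfold hat
  linear_combination h0

/-- Fourier transform in the first variable. -/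
noncomputable def fx (w : ℝ → ℝ → ℂ) (ξ y : ℝ) : ℂ :=
  FourierTransform.fourier (fun s => w s y) ξ

lemma fx_eq (w : ℝ → ℝ → ℂ) (ξ y : ℝ) :
    fx w ξ y = ∫ x : ℝ, Complex.exp (↑(-2 * π * x * ξ) * Complex.I) * w x y := by
  rw [fx, Real.fourier_real_eq_integral_exp_smul]
  rfl

lemma Nice.fx_cont (h : Nice a w) : Continuous (fun z : ℝ × ℝ => fx w z.1 z.2) := by
  obtain ⟨K, hK⟩ := h.supp
  have h1 : ∀ z : ℝ × ℝ, fx w z.1 z.2 =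
      ∫ x in Set.Icc (-K) K, Complex.exp (↑(-2 * π * x * z.1) * Complex.I) * w x z.2 := by
    intro z
    rw [fx_eq, setIntegral_eq_integral_of_forall_compl_eq_zero]
    intro x hx
    rw [hK x z.2, mul_zero]
    by_contra hc
    push Not at hc
    rw [abs_lt] at hc
    exact hx ⟨hc.1.le, hc.2.le⟩
  simp_rw [h1]
  apply continuous_parametric_integral_of_continuous _ isCompact_Icc
  have := h.continuous
  have h2 : Continuous (fun q : (ℝ × ℝ) × ℝ => w q.2 q.1.2) :=
    this.comp (continuous_snd.prodMk (continuous_snd.comp continuous_fst))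
  unfold Function.uncurry
  fun_prop

lemma Nice.plancherel_x (h : Nice a w) (y : ℝ) :
    ∫⁻ x, ENNReal.ofReal (‖w x y‖ ^ 2) = ∫⁻ ξ, ENNReal.ofReal (‖fx w ξ y‖ ^ 2) := by
  let f := (h.compactSupport y).toSchwartzMap (h.smooth_x y)
  have hf : ∀ x, f x = w x y := fun x => rfl
  have hg : ∀ x, (FourierTransform.fourier f) x = fx w x y := fun x => rfl
  have hi : ∀ g : SchwartzMap ℝ ℂ, Integrable (fun x => ‖g x‖ ^ 2) := fun g =>
    (g.memLp 2 volume).integrable_norm_pow (by simp)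
  have h0 := SchwartzMap.integral_norm_sq_fourier f
  have h1 := ofReal_integral_eq_lintegral_ofReal (hi f) (by filter_upwards with x; positivity)
  have h2 := ofReal_integral_eq_lintegral_ofReal (hi (FourierTransform.fourier f))
    (by filter_upwards with x; positivity)
  rw [h0] at h2
  simp only [hf] at h1
  simp only [hg, hf] at h2
  rw [← h1, ← h2]

lemma Nice.hat_eq (ha : 0 < a) (h : Nice a w) (ξ : ℝ) (n : ℤ) :
    fourierCoeffOn ha (fx w ξ) n = (1 / a : ℝ) * hat a w ξ n := by
  rw [fourierCoeffOn_eq_integral, hat, integral_prod_symm _ (h.chr_mul ha ξ n).integrable,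
    intervalIntegral.integral_of_le ha.le, Complex.real_smul, sub_zero]
  congr 2
  funext y
  rw [fx_eq, fourier_coe_apply, smul_eq_mul, ← integral_const_mul]
  congr 1
  funext x
  rw [← mul_assoc, ← Complex.exp_add, chr]
  congr 2
  push_cast
  ring

lemma Nice.parseval_y (ha : 0 < a) (h : Nice a w) (ξ : ℝ) :
    ∫⁻ y in Set.Ioc 0 a, ENNReal.ofReal (‖fx w ξ y‖ ^ 2) =
      ENNReal.ofReal a⁻¹ * ∑' n : ℤ, ENNReal.ofReal (‖hat a w ξ n‖ ^ 2) := by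
  have hc : Continuous (fx w ξ) := h.fx_cont.comp (continuous_const.prodMk continuous_id)
  have hm : MemLp (fx w ξ) 2 (volume.restrict (Set.Ioc 0 a)) := by
    obtain ⟨C, hC⟩ := (isCompact_Icc (a := (0:ℝ)) (b := a)).exists_bound_of_continuousOn
      hc.continuousOn
    refine MemLp.of_bound hc.aestronglyMeasurable C ?_
    filter_upwards [ae_restrict_mem measurableSet_Ioc] with y hy
    exact hC y (Set.Ioc_subset_Icc_self hy)
  have hs := hasSum_sq_fourierCoeffOn ha hm
  have hi : Integrable (fun y => ‖fx w ξ y‖ ^ 2) (volume.restrict (Set.Ioc 0 a)) :=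
    hm.integrable_norm_pow (by simp)
  rw [← ofReal_integral_eq_lintegral_ofReal hi (by filter_upwards with x; positivity),
    ← intervalIntegral.integral_of_le ha.le]
  have h2 : HasSum (fun n => ‖hat a w ξ n‖ ^ 2) (a * ∫ y in (0:ℝ)..a, ‖fx w ξ y‖ ^ 2) := by
    have := hs.mul_left (a ^ 2)
    simp only [h.hat_eq ha, norm_mul, Complex.norm_real, smul_eq_mul, sub_zero] at this
    have e1 : ∀ n, a ^ 2 * (‖1 / a‖ * ‖hat a w ξ n‖) ^ 2 = ‖hat a w ξ n‖ ^ 2 := by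
      intro n
      rw [Real.norm_of_nonneg (by positivity)]
      field_simp
    have e2 : ∀ t : ℝ, a ^ 2 * (a⁻¹ * t) = a * t := by
      intro t
      field_simp
    simpa only [e1, e2] using this
  rw [← ENNReal.ofReal_tsum_of_nonneg (fun n => by positivity) h2.summable, h2.tsum_eq,
    ← ENNReal.ofReal_mul (by positivity)]
  congr 1
  field_simp

theorem Nice.parseval (ha : 0 < a) (h : Nice a w) :
    ENNReal.ofReal (∫ x : ℝ, ∫ y in (0:ℝ)..a, ‖w x y‖ ^ 2) =
      ENNReal.ofReal a⁻¹ * ∫⁻ ξ : ℝ, ∑' n : ℤ, ENNReal.ofReal (‖hat a w ξ n‖ ^ 2) := by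
  have hi : Integrable (fun z : ℝ × ℝ => ‖w z.1 z.2‖ ^ 2) (cylMeasure a) := by
    apply integrable_cyl
    · exact h.continuous.norm.pow 2
    · obtain ⟨K, hK⟩ := h.supp
      exact ⟨K, fun x y hx => by simp [hK x y hx]⟩
  have e1 : ∫ x : ℝ, ∫ y in (0:ℝ)..a, ‖w x y‖ ^ 2 = ∫ z, ‖w z.1 z.2‖ ^ 2 ∂(cylMeasure a) := by
    rw [integral_prod _ hi]
    simp only [intervalIntegral.integral_of_le ha.le]
  rw [e1, ofReal_integral_eq_lintegral_ofReal hi (by filter_upwards with x; positivity),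
    lintegral_prod_symm _ (by
      exact (h.continuous.norm.pow 2).measurable.ennreal_ofReal.aemeasurable)]
  simp only [h.plancherel_x]
  rw [lintegral_lintegral_swap]
  · simp only [h.parseval_y ha]
    rw [lintegral_const_mul' _ _ ENNReal.ofReal_ne_top]
  · have : Continuous (fun z : ℝ × ℝ => fx w z.2 z.1) := h.fx_cont.comp continuous_swap
    exact (this.norm.pow 2).measurable.ennreal_ofReal.aemeasurable

/-- Multiplication by the exponential weight. -/
noncomputable def wt (ε : ℝ) (w : ℝ → ℝ → ℂ) (x y : ℝ) : ℂ := (Real.exp (ε * x) : ℂ) * w x y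

lemma Nice.wt (h : Nice a w) (ε : ℝ) : Nice a (wt ε w) := by
  refine h.mul (e := fun x _ => (Real.exp (ε * x) : ℂ)) ?_ (fun _ _ => rfl)
  have h1 : ContDiff ℝ (⊤ : ℕ∞) (fun p : ℝ × ℝ => Real.exp (ε * p.1)) := by fun_prop
  exact Complex.ofRealCLM.contDiff.comp h1

lemma Nice.const_mul (h : Nice a w) (c : ℂ) : Nice a (fun x y => c * w x y) :=
  h.mul (e := fun _ _ => c) contDiff_const (fun _ _ => rfl)

/-- Symbol of `∂ₓ` after conjugation with the weight. -/
noncomputable def sA (ε ξ : ℝ) : ℂ := 2 * π * ξ * Complex.I - ε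

/-- Symbol of `∂_y`. -/
noncomputable def sB (a : ℝ) (n : ℤ) : ℂ := 2 * π * n / a * Complex.I

lemma hat_wt_dx (ha : 0 < a) (h : Nice a w) (ε ξ : ℝ) (n : ℤ) :
    hat a (wt ε (dx w)) ξ n = sA ε ξ * hat a (wt ε w) ξ n := by
  have h1 : wt ε (dx w) = fun x y => dx (wt ε w) x y + (-(ε : ℂ)) * wt ε w x y := by
    funext x y
    have hd : HasDerivAt (fun s : ℝ => (Real.exp (ε * s) : ℂ))
        ((Real.exp (ε * x) * ε : ℝ) : ℂ) x := by
      have := ((hasDerivAt_id x).const_mul ε).exp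
      simpa using this.ofReal_comp
    rw [show dx (wt ε w) x y = _ from (hd.mul (h.hasDx x y)).deriv]
    simp only [wt]
    push_cast
    ring
  rw [h1, hat_add ha (h.wt ε).dx ((h.wt ε).const_mul _), hat_dx ha (h.wt ε), hat_const_mul, sA]
  ring

lemma hat_wt_dy (ha : 0 < a) (h : Nice a w) (ε ξ : ℝ) (n : ℤ) :
    hat a (wt ε (dy w)) ξ n = sB a n * hat a (wt ε w) ξ n := by
  have h1 : wt ε (dy w) = dy (wt ε w) := by
    funext x y
    rw [show dy (wt ε w) x y = _ from ((h.hasDy x y).const_mul _).deriv]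
    rfl
  rw [h1, hat_dy ha (h.wt ε), sB]

lemma Nice.iter_dx (h : Nice a w) (p : ℕ) : Nice a (CylEst.dx^[p] w) := by
  induction p with
  | zero => exact h
  | succ p ih => rw [Function.iterate_succ_apply']; exact ih.dx

lemma Nice.iter_dy (h : Nice a w) (p : ℕ) : Nice a (CylEst.dy^[p] w) := by
  induction p with
  | zero => exact h
  | succ p ih => rw [Function.iterate_succ_apply']; exact ih.dy

lemma mixed_eq (u : ℝ → ℝ → ℂ) (p q : ℕ) : mixedPartialDeriv p q u = dx^[p] (dy^[q] u) := by
  have h1 : ∀ q, (fun s y => iteratedDeriv q (u s) y) = dy^[q] u := by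
    intro q
    induction q with
    | zero => simp
    | succ q ih =>
      rw [Function.iterate_succ_apply', ← ih]
      funext s y
      rw [iteratedDeriv_succ]; rfl
  have h2 : ∀ (v : ℝ → ℝ → ℂ) p, (fun x y => iteratedDeriv p (fun s => v s y) x) = dx^[p] v := by
    intro v p
    induction p with
    | zero => simp
    | succ p ih =>
      rw [Function.iterate_succ_apply', ← ih]
      funext s y
      rw [iteratedDeriv_succ]; rfl
  rw [← h2, ← h1]
  rfl

lemma Nice.mixed (h : Nice a w) (p q : ℕ) : Nice a (mixedPartialDeriv p q w) := by
  rw [mixed_eq]; exact (h.iter_dy q).iter_dx p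

lemma hat_mixed (ha : 0 < a) (h : Nice a w) (ε ξ : ℝ) (n : ℤ) (p q : ℕ) :
    hat a (wt ε (mixedPartialDeriv p q w)) ξ n =
      sA ε ξ ^ p * sB a n ^ q * hat a (wt ε w) ξ n := by
  rw [mixed_eq]
  have h1 : ∀ q, hat a (wt ε (dy^[q] w)) ξ n = sB a n ^ q * hat a (wt ε w) ξ n := by
    intro q
    induction q with
    | zero => simp
    | succ q ih => rw [Function.iterate_succ_apply', hat_wt_dy ha (h.iter_dy q), ih]; ring
  induction p with
  | zero => simpa using h1 q
  | succ p ih =>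
    rw [Function.iterate_succ_apply', hat_wt_dx ha ((h.iter_dy q).iter_dx p), ih]; ring

/-- The operator. -/
noncomputable def op (μ : ℂ) (u : ℝ → ℝ → ℂ) (x y : ℝ) : ℂ :=
  -(mixedPartialDeriv 2 0 u x y) - mixedPartialDeriv 0 2 u x y - μ ^ 2 * u x y

lemma op_eq (μ : ℂ) (u : ℝ → ℝ → ℂ) : op μ u = fun x y =>
    (-1 : ℂ) * mixedPartialDeriv 2 0 u x y +
      ((-1 : ℂ) * mixedPartialDeriv 0 2 u x y + (-μ ^ 2) * u x y) := by
  funext x y; simp only [op]; ring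

lemma Nice.op (h : Nice a w) (μ : ℂ) : Nice a (op μ w) := by
  rw [op_eq]
  exact ((h.mixed 2 0).const_mul _).add (((h.mixed 0 2).const_mul _).add (h.const_mul _))

lemma hat_op (ha : 0 < a) (h : Nice a w) (ε ξ : ℝ) (n : ℤ) (μ : ℂ) :
    hat a (wt ε (op μ w)) ξ n =
      (-sA ε ξ ^ 2 - sB a n ^ 2 - μ ^ 2) * hat a (wt ε w) ξ n := by
  have h1 : wt ε (op μ w) = fun x y =>
    (-1 : ℂ) * wt ε (mixedPartialDeriv 2 0 w) x y +
      ((-1 : ℂ) * wt ε (mixedPartialDeriv 0 2 w) x y + (-μ ^ 2) * wt ε w x y) := by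
    funext x y; simp only [op, wt]; ring
  have n1 := ((h.mixed 2 0).wt ε).const_mul (-1)
  have n2 := ((h.mixed 0 2).wt ε).const_mul (-1)
  have n3 := (h.wt ε).const_mul (-μ ^ 2)
  rw [h1, hat_add ha n1 (n2.add n3), hat_add ha n2 n3, hat_const_mul, hat_const_mul,
    hat_const_mul, hat_mixed ha h, hat_mixed ha h]
  ring

lemma norm_wt_sq (ε : ℝ) (w : ℝ → ℝ → ℂ) (x y : ℝ) :
    ‖wt ε w x y‖ ^ 2 = Real.exp (2 * ε * x) * ‖w x y‖ ^ 2 := by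
  rw [wt, norm_mul, Complex.norm_real, Real.norm_of_nonneg (Real.exp_pos _).le, mul_pow,
    ← Real.exp_nat_mul]
  congr 2
  push_cast; ring

theorem symbol_bound (a ε : ℝ) (ha : 0 < a) (μ : ℂ)
    (hdisj : ∀ ξ : ℝ, ∀ ℓ : ℕ,
      μ ^ 2 - ((ξ : ℂ) + (ε : ℂ) * Complex.I) ^ 2 ≠
        ((4 * π ^ 2 * (ℓ : ℝ) ^ 2 / a ^ 2 : ℝ) : ℂ)) :
    ∃ D > (0 : ℝ), ∀ (ξ : ℝ) (n : ℤ),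
      ‖sA ε ξ‖ ^ 2 + ‖sB a n‖ ^ 2 + 1 ≤ D * ‖-sA ε ξ ^ 2 - sB a n ^ 2 - μ ^ 2‖ := by
  have haC : (a : ℂ) ≠ 0 := by exact_mod_cast ha.ne'
  have hA : ∀ ξ, ‖sA ε ξ‖ ^ 2 = (2 * π * ξ) ^ 2 + ε ^ 2 := by
    intro ξ
    rw [← Complex.normSq_eq_norm_sq, Complex.normSq_apply]
    simp [sA]; ring
  have hB : ∀ n, ‖sB a n‖ ^ 2 = (2 * π * n / a) ^ 2 := by
    intro n
    rw [show sB a n = ((2 * π * n / a : ℝ) : ℂ) * Complex.I by simp [sB]]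
    rw [norm_mul, Complex.norm_I, Complex.norm_real, mul_one, Real.norm_eq_abs, sq_abs]
  have hne : ∀ ξ n, -sA ε ξ ^ 2 - sB a n ^ 2 - μ ^ 2 ≠ 0 := by
    intro ξ n h0
    apply hdisj (2 * π * ξ) n.natAbs
    have e : ((n.natAbs : ℕ) : ℝ) ^ 2 = (n : ℝ) ^ 2 := by
      rw [Nat.cast_natAbs, Int.cast_abs, sq_abs]
    rw [e]
    simp only [sA, sB] at h0
    push_cast
    field_simp at h0 ⊢
    have hI := Complex.I_sq
    linear_combination (-1 : ℂ) * h0 + (-(4 * π ^ 2 * n ^ 2) - 4 * a ^ 2 * π ^ 2 * ξ ^ 2 - a ^ 2 * ε ^ 2) * hI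
  have hre : ∀ ξ n, (2 * π * ξ) ^ 2 + (2 * π * n / a) ^ 2 - ε ^ 2 - ‖μ‖ ^ 2 ≤
      ‖-sA ε ξ ^ 2 - sB a n ^ 2 - μ ^ 2‖ := by
    intro ξ n
    refine le_trans ?_ (Complex.re_le_norm _)
    have e : (-sA ε ξ ^ 2 - sB a n ^ 2).re =
        (2 * π * ξ) ^ 2 + (2 * π * n / a) ^ 2 - ε ^ 2 := by
      rw [show -sA ε ξ ^ 2 - sB a n ^ 2 =
        (((2 * π * ξ) ^ 2 + (2 * π * n / a) ^ 2 - ε ^ 2 : ℝ) : ℂ) +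
          ((4 * π * ξ * ε : ℝ) : ℂ) * Complex.I by
        simp only [sA, sB]
        push_cast
        have hI := Complex.I_sq
        linear_combination (-(2 * π * ξ) ^ 2 - (2 * π * n / a) ^ 2 : ℂ) * hI]
      rw [Complex.add_re, Complex.re_ofReal_mul, Complex.ofReal_re, Complex.I_re]
      ring
    rw [Complex.sub_re, e]
    have := Complex.re_le_norm (μ ^ 2)
    rw [norm_pow] at this
    linarith
  set M : ℝ := 2 * ε ^ 2 + 1 + ‖μ‖ ^ 2 with hM
  have hMpos : 0 < M := by positivity
  -- compact region
  obtain ⟨N, hN⟩ := exists_nat_ge (2 * M * a ^ 2 + 1)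
  have hcomp : IsCompact (Set.Icc (-(2 * M + 1)) (2 * M + 1) ×ˢ Set.Icc (-(N : ℤ)) N) :=
    isCompact_Icc.prod isCompact_Icc
  have hcont : Continuous (fun z : ℝ × ℤ => ‖-sA ε z.1 ^ 2 - sB a z.2 ^ 2 - μ ^ 2‖) := by
    have c1 : Continuous (fun ξ : ℝ => sA ε ξ) := by unfold sA; fun_prop
    have c2 : Continuous (fun n : ℤ => sB a n) := continuous_of_discreteTopology
    have c3 := c1.comp (continuous_fst (X := ℝ) (Y := ℤ))
    have c4 := c2.comp (continuous_snd (X := ℝ) (Y := ℤ))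
    exact (((c3.pow 2).neg.sub (c4.pow 2)).sub continuous_const).norm
  obtain ⟨z, hz, hmin⟩ := hcomp.exists_isMinOn
    ⟨((0 : ℝ), (0 : ℤ)), ⟨⟨by linarith, by linarith⟩, ⟨by simp, by simp⟩⟩⟩ hcont.continuousOn
  set δ := ‖-sA ε z.1 ^ 2 - sB a z.2 ^ 2 - μ ^ 2‖ with hδ
  have hδpos : 0 < δ := norm_pos_iff.mpr (hne _ _)
  refine ⟨2 + 2 * M / δ, by positivity, fun ξ n => ?_⟩
  rw [hA, hB]
  set X := ‖-sA ε ξ ^ 2 - sB a n ^ 2 - μ ^ 2‖ with hX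
  have hX0 : 0 ≤ X := norm_nonneg _
  have h3 := hre ξ n
  rw [add_mul]
  have hpos2 : 0 ≤ 2 * M / δ * X := by positivity
  by_cases hm : 2 * M ≤ (2 * π * ξ) ^ 2 + ε ^ 2 + (2 * π * n / a) ^ 2 + 1
  · linarith
  · push Not at hm
    have hπ := Real.pi_gt_three
    have hξ2 : ξ ^ 2 ≤ 2 * M := by
      have : ξ ^ 2 ≤ (2 * π * ξ) ^ 2 := by
        rw [mul_pow]; exact le_mul_of_one_le_left (sq_nonneg _) (by nlinarith)
      nlinarith [sq_nonneg ε, sq_nonneg (2 * π * n / a)]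
    have hn2 : (n : ℝ) ^ 2 ≤ 2 * M * a ^ 2 := by
      have : (n / a : ℝ) ^ 2 ≤ (2 * π * n / a) ^ 2 := by
        rw [mul_div_assoc, mul_pow (2 * π)]
        exact le_mul_of_one_le_left (sq_nonneg _) (by nlinarith)
      have h5 : (n / a : ℝ) ^ 2 ≤ 2 * M := by
        nlinarith [sq_nonneg ε, sq_nonneg (2 * π * ξ)]
      rw [div_pow, div_le_iff₀ (by positivity)] at h5
      exact h5
    have hmem : (ξ, n) ∈ Set.Icc (-(2 * M + 1)) (2 * M + 1) ×ˢ Set.Icc (-(N : ℤ)) N := by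
      refine ⟨⟨by nlinarith [sq_nonneg (ξ + 1)], by nlinarith [sq_nonneg (ξ - 1)]⟩, ?_, ?_⟩
      · have : (-(N : ℝ)) ≤ n := by nlinarith [sq_nonneg ((n : ℝ) + 1)]
        exact_mod_cast this
      · have : (n : ℝ) ≤ N := by nlinarith [sq_nonneg ((n : ℝ) - 1)]
        exact_mod_cast this
    have h6 : δ ≤ X := isMinOn_iff.mp hmin (ξ, n) hmem
    have h7 : 2 * M ≤ 2 * M / δ * X := by
      rw [div_mul_eq_mul_div, le_div_iff₀ hδpos]
      exact mul_le_mul_of_nonneg_left h6 (by positivity)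
    linarith

lemma pow_bound (A B : ℂ) (p q : ℕ) (hpq : p + q ≤ 2) :
    ‖A ^ p * B ^ q‖ ≤ ‖A‖ ^ 2 + ‖B‖ ^ 2 + 1 := by
  rw [norm_mul, norm_pow, norm_pow]
  have hA := norm_nonneg A
  have hB := norm_nonneg B
  have hp : p ≤ 2 := by omega
  have hq : q ≤ 2 := by omega
  interval_cases p <;> interval_cases q <;> first | omega | skip
  all_goals nlinarith [sq_nonneg (‖A‖ - 1), sq_nonneg (‖B‖ - 1), sq_nonneg (‖A‖ - ‖B‖)]

end CylEst

/-- Weighted coercive estimate on the model infinite cylinder of circumference `a`: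
if the parabola `{μ² − (ξ + iε)² : ξ ∈ ℝ}` misses the spectrum `{4π²ℓ²/a² : ℓ ∈ ℕ}` of the
cross-sectional Laplacian, then the full weighted `H²` norm of any smooth `a`-periodic
(in `y`) compactly supported (in `x`) function is controlled by the weighted `L²` norm of
`(−∂ₓ² − ∂_y² − μ²)u`. -/
theorem cylinder_weighted_coercive_estimate
    (a ε : ℝ) (ha : 0 < a) (hε : 0 < ε) (μ : ℂ)
    (hdisj : ∀ ξ : ℝ, ∀ ℓ : ℕ,
      μ ^ 2 - ((ξ : ℂ) + (ε : ℂ) * Complex.I) ^ 2 ≠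
        ((4 * π ^ 2 * (ℓ : ℝ) ^ 2 / a ^ 2 : ℝ) : ℂ)) :
    ∃ C > (0:ℝ), ∀ u : ℝ → ℝ → ℂ,
      ContDiff ℝ (⊤ : ℕ∞) (fun p : ℝ × ℝ => u p.1 p.2) →
      (∀ x y : ℝ, u x (y + a) = u x y) →
      (∃ K : ℝ, ∀ x y : ℝ, K ≤ |x| → u x y = 0) →
      (∑ p ∈ Finset.range 3, ∑ q ∈ Finset.range 3,
        if p + q ≤ 2 then
          ∫ x : ℝ, ∫ y in (0:ℝ)..a, Real.exp (2 * ε * x) * ‖mixedPartialDeriv p q u x y‖ ^ 2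
        else 0)
      ≤ C * ∫ x : ℝ, ∫ y in (0:ℝ)..a, Real.exp (2 * ε * x) *
          ‖-(mixedPartialDeriv 2 0 u x y) - mixedPartialDeriv 0 2 u x y - μ ^ 2 * u x y‖ ^ 2 := by
  obtain ⟨D, hD, hsym⟩ := CylEst.symbol_bound a ε ha μ hdisj
  refine ⟨6 * D ^ 2, by positivity, fun u hu hper hsupp => ?_⟩
  have h : CylEst.Nice a u := ⟨hu, hper, hsupp⟩
  have key : ∀ p q : ℕ, p + q ≤ 2 →
      ∫ x : ℝ, ∫ y in (0:ℝ)..a, Real.exp (2 * ε * x) * ‖mixedPartialDeriv p q u x y‖ ^ 2 ≤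
      D ^ 2 * ∫ x : ℝ, ∫ y in (0:ℝ)..a, Real.exp (2 * ε * x) *
          ‖-(mixedPartialDeriv 2 0 u x y) - mixedPartialDeriv 0 2 u x y - μ ^ 2 * u x y‖ ^ 2 := by
    intro p q hpq
    have h1 := ((h.mixed p q).wt ε).parseval ha
    have h2 := ((h.op μ).wt ε).parseval ha
    simp only [CylEst.norm_wt_sq] at h1 h2
    change _ ≤ D ^ 2 * ∫ x : ℝ, ∫ y in (0:ℝ)..a, Real.exp (2 * ε * x) * ‖CylEst.op μ u x y‖ ^ 2
    have hnn : 0 ≤ ∫ x : ℝ, ∫ y in (0:ℝ)..a,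
        Real.exp (2 * ε * x) * ‖CylEst.op μ u x y‖ ^ 2 :=
      integral_nonneg fun x => intervalIntegral.integral_nonneg ha.le fun y _ => by positivity
    rw [← ENNReal.ofReal_le_ofReal_iff (by positivity), ENNReal.ofReal_mul (by positivity), h1, h2,
      mul_left_comm]
    gcongr
    rw [← lintegral_const_mul' _ _ ENNReal.ofReal_ne_top]
    refine lintegral_mono fun ξ => ?_
    rw [← ENNReal.tsum_mul_left]
    refine ENNReal.tsum_le_tsum fun n => ?_
    rw [← ENNReal.ofReal_mul (by positivity)]
    apply ENNReal.ofReal_le_ofReal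
    rw [CylEst.hat_mixed ha h, CylEst.hat_op ha h, norm_mul (_ * _) (CylEst.hat _ _ _ _),
      norm_mul (_ - _) (CylEst.hat _ _ _ _), ← mul_pow, ← mul_assoc]
    have h3 := (CylEst.pow_bound (CylEst.sA ε ξ) (CylEst.sB a n) p q hpq).trans (hsym ξ n)
    gcongr
  have k1 := key 0 0 (by norm_num)
  have k2 := key 0 1 (by norm_num)
  have k3 := key 0 2 (by norm_num)
  have k4 := key 1 0 (by norm_num)
  have k5 := key 1 1 (by norm_num)
  have k6 := key 2 0 (by norm_num)
  simp only [Finset.sum_range_succ, Finset.sum_range_zero]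
  norm_num only [if_true, if_false]
  linarith
end

section
/- Let a > 0, ε > 0 and μ ∈ ℂ, and suppose there exist ξ₀ ∈ ℝ and a nonnegative integer ℓ₀ such that μ² − (ξ₀ + iε)² = 4π²ℓ₀²/a². Then there exists a sequence (u_j) of smooth functions ℝ² → ℂ, each a-periodic in the second variable and compactly supported in the first variable, and a constant C₀ > 0, such that ∫_{ℝ×(0,a)} e^{2εx} |(−∂_x² − ∂_y² − μ²) u_j(x,y)|² dx dy ≤ C₀ and ∫_{ℝ×(0,a)} |u_j(x,y)|² dx dy ≤ C₀ for all j, while ∫_{ℝ×(0,a)} e^{2εx} |u_j(x,y)|² dx dy → ∞ as j → ∞. -/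
open MeasureTheory Real

lemma iter2_of_hasDerivAt (f fa fb : ℝ → ℂ) (h1 : ∀ x, HasDerivAt f (fa x) x)
    (h2 : ∀ x, HasDerivAt fa (fb x) x) (x : ℝ) : iteratedDeriv 2 f x = fb x := by
  have e1 : deriv f = fa := funext fun x => (h1 x).deriv
  rw [iteratedDeriv_succ, iteratedDeriv_one, e1, (h2 x).deriv]

lemma expo_deriv (c : ℂ) (x : ℝ) :
    HasDerivAt (fun x : ℝ => Complex.exp (c * x)) (c * Complex.exp (c * x)) x := by
  have h : HasDerivAt (fun x : ℝ => c * (x : ℂ)) c x := by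
    simpa using ((hasDerivAt_id x).ofReal_comp).const_mul c
  simpa [mul_comm] using h.cexp

lemma psi_deriv (ψ ψ1 : ℝ → ℝ) (h : ∀ x, HasDerivAt ψ (ψ1 x) x) (N : ℝ) (x : ℝ) :
    HasDerivAt (fun x : ℝ => ((ψ (x / N) : ℝ) : ℂ)) ((ψ1 (x / N) : ℂ) / N) x := by
  have h1 : HasDerivAt (fun x : ℝ => x / N) (1 / N) x := (hasDerivAt_id x).div_const N
  have h2 := ((h (x / N)).comp x h1).ofReal_comp
  have e : ((ψ1 (x / N) : ℂ) / N) = ((ψ1 (x / N) * (1 / N) : ℝ) : ℂ) := by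
    push_cast
    ring
  rw [e]
  exact h2

/-- A smooth cutoff supported in `(1, 3)` -/
lemma exists_cutoff : ∃ ψ ψ1 ψ2 : ℝ → ℝ, ContDiff ℝ (⊤ : ℕ∞) ψ ∧
    (∀ x, HasDerivAt ψ (ψ1 x) x) ∧ (∀ x, HasDerivAt ψ1 (ψ2 x) x) ∧
    (∀ x, 0 ≤ ψ x ∧ ψ x ≤ 1) ∧ (∀ x, x ≤ 0 → ψ x = 0) ∧ (∀ x, 4 ≤ x → ψ x = 0) ∧
    0 < ∫ x, ψ x ^ 2 ∧ Integrable (fun x => ψ1 x ^ 2) ∧ Integrable (fun x => ψ2 x ^ 2) := by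
  let b : ContDiffBump (2 : ℝ) := ⟨1, 2, by norm_num, by norm_num⟩
  have hb : ContDiff ℝ (⊤ : ℕ∞) (b : ℝ → ℝ) := b.contDiff
  have hb1 : ContDiff ℝ (⊤ : ℕ∞) (deriv (b : ℝ → ℝ)) := by
    have := (contDiff_infty_iff_deriv (f := (b : ℝ → ℝ))).1 hb
    exact this.2
  have hb2 : ContDiff ℝ (⊤ : ℕ∞) (deriv (deriv (b : ℝ → ℝ))) :=
    ((contDiff_infty_iff_deriv (f := deriv (b : ℝ → ℝ))).1 hb1).2
  have hc : HasCompactSupport (b : ℝ → ℝ) := b.hasCompactSupport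
  have hsq : ∀ f : ℝ → ℝ, Continuous f → HasCompactSupport f → Integrable (fun x => f x ^ 2) := by
    intro f hf hs
    have hs2 : HasCompactSupport (fun x => f x ^ 2) :=
      hs.comp_left (g := fun x : ℝ => x ^ 2) (by simp)
    exact (hf.pow 2).integrable_of_hasCompactSupport hs2
  refine ⟨b, deriv b, deriv (deriv b), hb,
    fun x => ((hb.differentiable (by simp)) x).hasDerivAt,
    fun x => ((hb1.differentiable (by simp)) x).hasDerivAt,
    fun x => ⟨b.nonneg, b.le_one⟩, ?_, ?_, ?_, hsq _ hb1.continuous hc.deriv,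
    hsq _ hb2.continuous hc.deriv.deriv⟩
  · intro x hx
    apply b.zero_of_le_dist
    show (2:ℝ) ≤ dist x 2
    rw [Real.dist_eq, abs_of_nonpos (by linarith)]
    linarith
  · intro x hx
    apply b.zero_of_le_dist
    show (2:ℝ) ≤ dist x 2
    rw [Real.dist_eq, abs_of_nonneg (by linarith)]
    linarith
  · have hcont : Continuous (fun x => b x ^ 2) := hb.continuous.pow 2
    apply hcont.integral_pos_of_hasCompactSupport_nonneg_nonzero
      (hc.comp_left (g := fun x : ℝ => x ^ 2) (by simp)) (fun x => sq_nonneg _) (x := 2)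
    have : b 2 = 1 := b.one_of_mem_closedBall (by simp [b])
    simp [this]

/-- Failure of the weighted a priori estimate on the model cylinder when the parabola
`{μ² − (ξ + iε)² : ξ ∈ ℝ}` meets the cross-sectional spectrum `{4π²ℓ²/a² : ℓ ∈ ℕ}`:
there is a sequence of smooth, `a`-periodic (in `y`), compactly supported (in `x`) test
functions with uniformly bounded weighted `L²` norm of `(−∂ₓ²−∂_y²−μ²)u_j` and uniformly
bounded unweighted `L²` norm, whose weighted `L²` norms blow up. -/
theorem cylinder_not_fredholm
    (a ε : ℝ) (ha : 0 < a) (hε : 0 < ε) (μ : ℂ)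
    (ξ₀ : ℝ) (ℓ₀ : ℕ)
    (hres : μ ^ 2 - ((ξ₀ : ℂ) + (ε : ℂ) * Complex.I) ^ 2 =
      ((4 * π ^ 2 * (ℓ₀ : ℝ) ^ 2 / a ^ 2 : ℝ) : ℂ)) :
    ∃ (u : ℕ → ℝ → ℝ → ℂ) (C₀ : ℝ), 0 < C₀ ∧
      (∀ j, ContDiff ℝ (⊤ : ℕ∞) (fun p : ℝ × ℝ => u j p.1 p.2)) ∧
      (∀ j, ∀ x y : ℝ, u j x (y + a) = u j x y) ∧
      (∀ j, ∃ K : ℝ, ∀ x y : ℝ, K ≤ |x| → u j x y = 0) ∧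
      (∀ j, (∫ x : ℝ, ∫ y in (0:ℝ)..a, Real.exp (2 * ε * x) *
        ‖-(mixedPartialDeriv 2 0 (u j) x y) - mixedPartialDeriv 0 2 (u j) x y
            - μ ^ 2 * u j x y‖ ^ 2) ≤ C₀) ∧
      (∀ j, (∫ x : ℝ, ∫ y in (0:ℝ)..a, ‖u j x y‖ ^ 2) ≤ C₀) ∧
      Filter.Tendsto
        (fun j => ∫ x : ℝ, ∫ y in (0:ℝ)..a, Real.exp (2 * ε * x) * ‖u j x y‖ ^ 2)
        Filter.atTop Filter.atTop := by
  obtain ⟨ψ, ψ1, ψ2, hψ, h1, h2, h01, hneg, hbig, hpos, hi1, hi2⟩ := exists_cutoff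
  set κ : ℂ := (ξ₀ : ℂ) + (ε : ℂ) * Complex.I with hκ
  set c : ℂ := Complex.I * κ with hc
  set d : ℂ := ((2 * π * ℓ₀ / a : ℝ) : ℂ) * Complex.I with hd
  have haC : (a : ℂ) ≠ 0 := by exact_mod_cast ha.ne'
  have hμ : μ ^ 2 = - c ^ 2 - d ^ 2 := by
    have h3 : μ ^ 2 = κ ^ 2 + ((4 * π ^ 2 * (ℓ₀ : ℝ) ^ 2 / a ^ 2 : ℝ) : ℂ) := by
      rw [← hres]; ring
    rw [h3, hc, hd, mul_pow, mul_pow, Complex.I_sq]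
    push_cast
    ring
  have hnd : ∀ y : ℝ, ‖Complex.exp (d * y)‖ = 1 := by
    intro y
    rw [Complex.norm_exp]
    simp [hd]
  have hnc : ∀ x : ℝ, ‖Complex.exp (c * x)‖ ^ 2 = Real.exp (-(2 * ε * x)) := by
    intro x
    rw [Complex.norm_exp, ← Real.exp_nat_mul]
    congr 1
    simp [hc, hκ]
    ring
  have hec : ∀ x : ℝ, Real.exp (2 * ε * x) * Real.exp (-(2 * ε * x)) = 1 := by
    intro x
    rw [← Real.exp_add]; simp
  let N : ℕ → ℝ := fun j => (j : ℝ) + 1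
  have hN : ∀ j, 1 ≤ N j := fun j => by simp [N]
  let u : ℕ → ℝ → ℝ → ℂ := fun j x y =>
    ((ψ (x / N j) : ℝ) : ℂ) * Complex.exp (c * x) * Complex.exp (d * y)
  have hnu : ∀ j x y, ‖u j x y‖ ^ 2 = ψ (x / N j) ^ 2 * Real.exp (-(2 * ε * x)) := by
    intro j x y
    simp only [u]
    rw [norm_mul, norm_mul, hnd, mul_one, mul_pow, hnc, Complex.norm_real, Real.norm_eq_abs, sq_abs]
  have hPu : ∀ j x y, -(mixedPartialDeriv 2 0 (u j) x y) - mixedPartialDeriv 0 2 (u j) x y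
            - μ ^ 2 * u j x y = -((ψ2 (x / N j) : ℂ) / N j / N j + 2 * c * ((ψ1 (x / N j) : ℂ) / N j))
              * Complex.exp (c * x) * Complex.exp (d * y) := by
    intro j x y
    have e1 : mixedPartialDeriv 2 0 (u j) x y =
        ((ψ2 (x / N j) : ℂ) / N j / N j + 2 * c * ((ψ1 (x / N j) : ℂ) / N j)
          + c ^ 2 * (ψ (x / N j) : ℂ)) * Complex.exp (c * x) * Complex.exp (d * y) := by
      unfold mixedPartialDeriv
      simp only [iteratedDeriv_zero]
      refine iter2_of_hasDerivAt _
        (fun x => ((ψ1 (x / N j) : ℂ) / N j + c * (ψ (x / N j) : ℂ)) * Complex.exp (c * x)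
          * Complex.exp (d * y))
        (fun x => ((ψ2 (x / N j) : ℂ) / N j / N j + 2 * c * ((ψ1 (x / N j) : ℂ) / N j)
          + c ^ 2 * (ψ (x / N j) : ℂ)) * Complex.exp (c * x) * Complex.exp (d * y)) ?_ ?_ x
      · intro x
        have := ((psi_deriv ψ ψ1 h1 (N j) x).mul (expo_deriv c x)).mul_const (Complex.exp (d * y))
        refine HasDerivAt.congr_deriv this ?_
        ring
      · intro x
        have := ((((psi_deriv ψ1 ψ2 h2 (N j) x).div_const (N j : ℂ)).add
          ((psi_deriv ψ ψ1 h1 (N j) x).const_mul c)).mul (expo_deriv c x)).mul_const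
            (Complex.exp (d * y))
        refine HasDerivAt.congr_deriv this ?_
        try simp only [Pi.add_apply]
        ring
    have e2 : mixedPartialDeriv 0 2 (u j) x y = d ^ 2 * u j x y := by
      unfold mixedPartialDeriv
      simp only [iteratedDeriv_zero]
      refine iter2_of_hasDerivAt _ (fun y => d * u j x y) (fun y => d ^ 2 * u j x y) ?_ ?_ y
      · intro y
        have := (expo_deriv d y).const_mul (((ψ (x / N j) : ℝ) : ℂ) * Complex.exp (c * x))
        refine HasDerivAt.congr_deriv this ?_
        simp only [u]
        ring
      · intro y
        have := ((expo_deriv d y).const_mul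
          (((ψ (x / N j) : ℝ) : ℂ) * Complex.exp (c * x))).const_mul d
        refine HasDerivAt.congr_deriv this ?_
        simp only [u]
        ring
    rw [e1, e2, hμ]
    simp only [u]
    ring

  set A := ∫ x, ψ1 x ^ 2 with hA
  set B := ∫ x, ψ2 x ^ 2 with hB
  have hA0 : 0 ≤ A := integral_nonneg fun x => sq_nonneg _
  have hB0 : 0 ≤ B := integral_nonneg fun x => sq_nonneg _
  have hcomp : ∀ (f : ℝ → ℝ) (j : ℕ), ∫ x, f (x / N j) = N j * ∫ x, f x := by
    intro f j
    rw [Measure.integral_comp_div f (N j), abs_of_nonneg (by linarith [hN j]), smul_eq_mul]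
  refine ⟨u, a * (2 * B + 8 * ‖c‖ ^ 2 * A) + a * (1 / (2 * ε)), by positivity, ?_, ?_, ?_, ?_, ?_, ?_⟩
  · intro j
    have k1 : ContDiff ℝ (⊤ : ℕ∞) (fun p : ℝ × ℝ => ((ψ (p.1 / N j) : ℝ) : ℂ)) :=
      Complex.ofRealCLM.contDiff.comp (hψ.comp (contDiff_fst.div_const (N j)))
    have k2 : ContDiff ℝ (⊤ : ℕ∞) (fun p : ℝ × ℝ => Complex.exp (c * (p.1 : ℂ))) :=
      (contDiff_const.mul (Complex.ofRealCLM.contDiff.comp contDiff_fst)).cexp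
    have k3 : ContDiff ℝ (⊤ : ℕ∞) (fun p : ℝ × ℝ => Complex.exp (d * (p.2 : ℂ))) :=
      (contDiff_const.mul (Complex.ofRealCLM.contDiff.comp contDiff_snd)).cexp
    exact (k1.mul k2).mul k3
  · intro j x y
    simp only [u]
    congr 1
    have : d * ((y + a : ℝ) : ℂ) = d * y + (ℓ₀ : ℂ) * (2 * π * Complex.I) := by
      rw [hd]
      push_cast
      field_simp
    rw [this, Complex.exp_add, Complex.exp_nat_mul_two_pi_mul_I, mul_one]
  · intro j
    refine ⟨4 * N j, fun x y hx => ?_⟩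
    have hNj := hN j
    have : ψ (x / N j) = 0 := by
      rcases le_total x 0 with h | h
      · exact hneg _ (div_nonpos_of_nonpos_of_nonneg h (by linarith))
      · apply hbig
        rw [le_div_iff₀ (by linarith)]
        rwa [abs_of_nonneg h] at hx
    simp [u, this]
  · intro j
    have hNj := hN j
    have hN0 : 0 < N j := by linarith
    have key : ∀ x y : ℝ, Real.exp (2 * ε * x) *
        ‖-(mixedPartialDeriv 2 0 (u j) x y) - mixedPartialDeriv 0 2 (u j) x y
            - μ ^ 2 * u j x y‖ ^ 2 =
        ‖(ψ2 (x / N j) : ℂ) / N j / N j + 2 * c * ((ψ1 (x / N j) : ℂ) / N j)‖ ^ 2 := by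
      intro x y
      rw [hPu, norm_mul, norm_mul, hnd, mul_one, norm_neg, mul_pow, hnc]
      linear_combination ‖(ψ2 (x / N j) : ℂ) / N j / N j + 2 * c * ((ψ1 (x / N j) : ℂ) / N j)‖ ^ 2 * hec x
    simp only [key, intervalIntegral.integral_const, smul_eq_mul, sub_zero]
    rw [integral_const_mul]
    have hle : ∫ x, ‖(ψ2 (x / N j) : ℂ) / N j / N j + 2 * c * ((ψ1 (x / N j) : ℂ) / N j)‖ ^ 2 ≤
        2 * B + 8 * ‖c‖ ^ 2 * A := by
      have hsum : Integrable (fun x => 2 / N j ^ 4 * ψ2 x ^ 2 + 8 * ‖c‖ ^ 2 / N j ^ 2 * ψ1 x ^ 2) :=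
        (hi2.const_mul _).add (hi1.const_mul _)
      have hb : ∀ x : ℝ, ‖(ψ2 (x / N j) : ℂ) / N j / N j + 2 * c * ((ψ1 (x / N j) : ℂ) / N j)‖ ^ 2 ≤
          2 / N j ^ 4 * ψ2 (x / N j) ^ 2 + 8 * ‖c‖ ^ 2 / N j ^ 2 * ψ1 (x / N j) ^ 2 := by
        intro x
        have t1 := norm_add_le ((ψ2 (x / N j) : ℂ) / N j / N j) (2 * c * ((ψ1 (x / N j) : ℂ) / N j))
        have t2 := pow_le_pow_left₀ (norm_nonneg _) t1 2
        have t3 : ‖(ψ2 (x / N j) : ℂ) / N j / N j‖ ^ 2 = ψ2 (x / N j) ^ 2 / N j ^ 4 := by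
          rw [norm_div, norm_div, Complex.norm_real, Complex.norm_real, Real.norm_eq_abs,
            Real.norm_eq_abs, abs_of_pos hN0, div_pow, div_pow, sq_abs]
          field_simp
        have t4 : ‖2 * c * ((ψ1 (x / N j) : ℂ) / N j)‖ ^ 2 =
            4 * ‖c‖ ^ 2 * ψ1 (x / N j) ^ 2 / N j ^ 2 := by
          rw [norm_mul, norm_mul, norm_div, Complex.norm_real, Complex.norm_real, Real.norm_eq_abs,
            Real.norm_eq_abs, abs_of_pos hN0, mul_pow, mul_pow, div_pow, sq_abs]
          norm_num
          ring
        have t5 := add_sq_le (a := ‖(ψ2 (x / N j) : ℂ) / N j / N j‖)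
          (b := ‖2 * c * ((ψ1 (x / N j) : ℂ) / N j)‖)
        rw [t3, t4] at t5
        calc _ ≤ _ := t2
          _ ≤ _ := t5
          _ = _ := by ring
      calc _ ≤ ∫ x, (fun x => 2 / N j ^ 4 * ψ2 x ^ 2 + 8 * ‖c‖ ^ 2 / N j ^ 2 * ψ1 x ^ 2) (x / N j) :=
            integral_mono_of_nonneg (Filter.Eventually.of_forall fun x => by positivity)
              (hsum.comp_div hN0.ne') (Filter.Eventually.of_forall hb)
        _ = N j * (2 / N j ^ 4 * B + 8 * ‖c‖ ^ 2 / N j ^ 2 * A) := by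
            rw [hcomp (fun x => 2 / N j ^ 4 * ψ2 x ^ 2 + 8 * ‖c‖ ^ 2 / N j ^ 2 * ψ1 x ^ 2) j, integral_add (hi2.const_mul _) (hi1.const_mul _), integral_const_mul,
              integral_const_mul]
        _ = 2 * B / N j ^ 3 + 8 * ‖c‖ ^ 2 * A / N j := by field_simp
        _ ≤ _ := by
            gcongr
            · exact div_le_self (by positivity) (one_le_pow₀ hNj)
            · exact div_le_self (by positivity) hNj
    have : 0 ≤ a * (1 / (2 * ε)) := by positivity
    have := mul_le_mul_of_nonneg_left hle ha.le
    linarith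
  · intro j
    have hN0 : 0 < N j := by linarith [hN j]
    simp only [hnu, intervalIntegral.integral_const, smul_eq_mul, sub_zero]
    rw [integral_const_mul]
    have hle : ∫ x, ψ (x / N j) ^ 2 * Real.exp (-(2 * ε * x)) ≤ 1 / (2 * ε) := by
      have hi : IntegrableOn (fun x : ℝ => Real.exp (-(2 * ε) * x)) (Set.Ioi 0) :=
        exp_neg_integrableOn_Ioi 0 (by positivity)
      calc _ ≤ ∫ x, (Set.Ioi (0:ℝ)).indicator (fun x : ℝ => Real.exp (-(2 * ε) * x)) x := by
            apply integral_mono_of_nonneg (Filter.Eventually.of_forall fun x => by positivity)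
              (hi.integrable_indicator measurableSet_Ioi)
            refine Filter.Eventually.of_forall fun x => ?_
            by_cases hx : 0 < x
            · simp only [Set.indicator, Set.mem_Ioi, hx, if_true]
              rw [neg_mul]
              apply mul_le_of_le_one_left (Real.exp_pos _).le
              exact pow_le_one₀ (h01 _).1 (h01 _).2
            · have : ψ (x / N j) = 0 :=
                hneg _ (div_nonpos_of_nonpos_of_nonneg (not_lt.1 hx) hN0.le)
              simp [this, hx]
        _ = 1 / (2 * ε) := by
            rw [integral_indicator measurableSet_Ioi, integral_exp_mul_Ioi (by linarith)]
            simp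
    have : 0 ≤ a * (2 * B + 8 * ‖c‖ ^ 2 * A) := by positivity
    have := mul_le_mul_of_nonneg_left hle ha.le
    linarith
  · have key : ∀ j x y, Real.exp (2 * ε * x) * ‖u j x y‖ ^ 2 = ψ (x / N j) ^ 2 := by
      intro j x y
      rw [hnu]
      linear_combination ψ (x / N j) ^ 2 * hec x
    simp only [key, intervalIntegral.integral_const, smul_eq_mul, sub_zero]
    have e : ∀ j, ∫ x, a * ψ (x / N j) ^ 2 = (a * ∫ x, ψ x ^ 2) * N j := by
      intro j
      rw [integral_const_mul, hcomp (fun x => ψ x ^ 2) j]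
      ring
    simp only [e]
    apply Filter.Tendsto.const_mul_atTop (by positivity)
    exact Filter.tendsto_atTop_add_const_right _ _ tendsto_natCast_atTop_atTop
end
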